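/- arXiv:1506.06844 — 5 statements merged into one kernel-verified Lean document; each statement's English description precedes it below -/
import Mathlib

section
/- Let A, B be tuples of complex numbers and s a complex number with ℜ(s+α+β) > 1 for every entry α of A and β of B. Then Σ_{n≥1} τ_A(n) τ_B(n) n^{−s} converges absolutely and equals ∏_{α∈A, β∈B} ζ(s+α+β) × ∏_p [ ∏_{α∈A, β∈B} (1 − p^{−s−α−β}) · Σ_{j≥0} τ_A(p^j) τ_B(p^j) p^{−js} ], where the product over primes p converges absolutely. -/
open Complex

/-- Shifted divisor function: `tauSh A n = ∑_{n₁⋯n_k = n} n₁^{-α₁}⋯n_k^{-α_k}`,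
defined by iterated Dirichlet convolution. -/
noncomputable def tauSh : List ℂ → ℕ → ℂ
  | [], n => if n = 1 then 1 else 0
  | a :: A, n => ∑ d ∈ n.divisors, (d : ℂ) ^ (-a) * tauSh A (n / d)

/-- `g_A(s,q) = ∏_{p ∣ q} ( ∏_{α∈A} (1 − p^{−s−α}) · ∑_{j≥0} τ_A(p^{j+q_p}) p^{−js} )`. -/
noncomputable def gSh (A : List ℂ) (s : ℂ) (q : ℕ) : ℂ :=
  ∏ p ∈ q.primeFactors,
    ((A.map (fun α => 1 - (p : ℂ) ^ (-s - α))).prod *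
      ∑' j : ℕ, tauSh A (p ^ (j + q.factorization p)) * (p : ℂ) ^ (-(j : ℂ) * s))

/-- `G_A(s,q) = ∑_{d∣q} (μ(d)/φ(d)) d^s ∑_{e∣d} (μ(e)/e^s) g_A(s, qe/d)`. -/
noncomputable def GSh (A : List ℂ) (s : ℂ) (q : ℕ) : ℂ :=
  ∑ d ∈ q.divisors, ((ArithmeticFunction.moebius d : ℂ) / (Nat.totient d : ℂ)) * (d : ℂ) ^ s *
    ∑ e ∈ d.divisors, (ArithmeticFunction.moebius e : ℂ) / (e : ℂ) ^ s * gSh A s (q * e / d)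

/-!
With `σ = ℜ s` and `M_A`, `M_B` the convolutions of the functions `n ↦ n^(-ℜ α)` and
`n ↦ n^(-ℜ β)`, the Dirichlet series is dominated by `∑ M_A(n) M_B(n) n^(-σ)`.
A Dirichlet convolution of nonnegative submultiplicative functions is again submultiplicative, and
for submultiplicative `g` one has `(f₁ * f₂) · g ≤ (f₁ · g) * (f₂ · g)`; hence `(f₁ * ⋯ * f_k) · g`
is summable as soon as every `f_i · g` is. Using this once to expand `M_A` and once to expand `M_B`
reduces absolute convergence to that of the series `∑ n^(-ℜ(s + α + β))`.

The summand is multiplicative, so the series is an absolutely convergent Euler product. Multiplying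
it by the Euler products of the `ζ(s + α + β)⁻¹` factor by factor gives the formula.
-/

section Submultiplicative

open ArithmeticFunction

variable {R : Type*} [CommSemiring R] [PartialOrder R]

/-- Nonnegative arithmetic functions with `f (m * n) ≤ f m * f n` for all `m` and `n`, coprime or
not. Nonnegativity is part of the notion so that it is stable under Dirichlet convolution. -/
structure IsSubmultiplicative (f : ArithmeticFunction R) : Prop where
  nonneg (n : ℕ) : 0 ≤ f n
  map_mul_le (m n : ℕ) : f (m * n) ≤ f m * f n

variable [IsOrderedRing R] {f g f₁ f₂ : ArithmeticFunction R}

lemma arithmeticFunction_mul_nonneg (hf : ∀ n, 0 ≤ f n) (hg : ∀ n, 0 ≤ g n) (n : ℕ) :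
    0 ≤ (f * g) n := by
  rw [mul_apply]
  exact Finset.sum_nonneg fun _ _ => mul_nonneg (hf _) (hg _)

lemma arithmeticFunction_one_nonneg (n : ℕ) : 0 ≤ (1 : ArithmeticFunction R) n := by
  rw [one_apply]
  split_ifs
  exacts [zero_le_one, le_rfl]

lemma arithmeticFunction_list_prod_nonneg {L : List (ArithmeticFunction R)}
    (hL : ∀ f ∈ L, ∀ n, 0 ≤ f n) (n : ℕ) : 0 ≤ L.prod n :=
  List.prod_induction (fun f : ArithmeticFunction R => ∀ n, 0 ≤ f n)
    (fun _ _ => arithmeticFunction_mul_nonneg) arithmeticFunction_one_nonneg hL n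

lemma divisorsAntidiagonal_mul_subset (m n : ℕ) :
    (m * n).divisorsAntidiagonal ⊆
      (m.divisorsAntidiagonal ×ˢ n.divisorsAntidiagonal).image fun x => x.1 * x.2 := by
  rintro ⟨d, e⟩ hde
  obtain ⟨hde, hmn⟩ := Nat.mem_divisorsAntidiagonal.mp hde
  obtain ⟨d₁, d₂, ⟨e₁, rfl⟩, ⟨e₂, rfl⟩, rfl⟩ :=
    exists_dvd_and_dvd_of_dvd_mul (Dvd.intro e hde)
  have he : e₁ * e₂ = e := by
    refine mul_left_cancel₀ (a := d₁ * d₂) (by aesop) ?_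
    rw [hde, mul_mul_mul_comm]
  exact Finset.mem_image.mpr ⟨((d₁, e₁), (d₂, e₂)), by aesop, by simp [he]⟩

lemma IsSubmultiplicative.one : IsSubmultiplicative (1 : ArithmeticFunction R) where
  nonneg := arithmeticFunction_one_nonneg
  map_mul_le m n := by
    by_cases hm : m = 1
    · simp [hm]
    · simp [one_apply, hm]

lemma IsSubmultiplicative.pmul (hf : IsSubmultiplicative f) (hg : IsSubmultiplicative g) :
    IsSubmultiplicative (f.pmul g) where
  nonneg n := mul_nonneg (hf.nonneg n) (hg.nonneg n)
  map_mul_le m n := by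
    simp only [pmul_apply]
    rw [mul_mul_mul_comm]
    exact mul_le_mul (hf.map_mul_le m n) (hg.map_mul_le m n) (hg.nonneg _)
      (mul_nonneg (hf.nonneg m) (hf.nonneg n))

lemma IsSubmultiplicative.mul (hf : IsSubmultiplicative f) (hg : IsSubmultiplicative g) :
    IsSubmultiplicative (f * g) where
  nonneg := arithmeticFunction_mul_nonneg hf.nonneg hg.nonneg
  map_mul_le m n := by
    have hterm (x : ℕ × ℕ) : 0 ≤ f x.1 * g x.2 := mul_nonneg (hf.nonneg _) (hg.nonneg _)
    calc (f * g) (m * n)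
      _ = ∑ x ∈ (m * n).divisorsAntidiagonal, f x.1 * g x.2 := mul_apply
      _ ≤ ∑ x ∈ (m.divisorsAntidiagonal ×ˢ n.divisorsAntidiagonal).image fun x => x.1 * x.2,
            f x.1 * g x.2 :=
          Finset.sum_le_sum_of_subset_of_nonneg (divisorsAntidiagonal_mul_subset m n)
            fun x _ _ => hterm x
      _ ≤ ∑ x ∈ m.divisorsAntidiagonal ×ˢ n.divisorsAntidiagonal,
            f (x.1.1 * x.2.1) * g (x.1.2 * x.2.2) :=
          Finset.sum_image_le_of_nonneg fun x _ => hterm x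
      _ ≤ ∑ x ∈ m.divisorsAntidiagonal ×ˢ n.divisorsAntidiagonal,
            (f x.1.1 * g x.1.2) * (f x.2.1 * g x.2.2) := by
          refine Finset.sum_le_sum fun x _ => ?_
          rw [mul_mul_mul_comm]
          exact mul_le_mul (hf.map_mul_le _ _) (hg.map_mul_le _ _) (hg.nonneg _)
            (mul_nonneg (hf.nonneg _) (hf.nonneg _))
      _ = (f * g) m * (f * g) n := by
          rw [mul_apply, mul_apply, Finset.sum_mul_sum, Finset.sum_product]

lemma IsSubmultiplicative.list_prod {L : List (ArithmeticFunction R)}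
    (hL : ∀ f ∈ L, IsSubmultiplicative f) : IsSubmultiplicative L.prod :=
  List.prod_induction _ (fun _ _ => IsSubmultiplicative.mul) IsSubmultiplicative.one hL

lemma IsSubmultiplicative.mul_pmul_le (hg : IsSubmultiplicative g) (hf₁ : ∀ n, 0 ≤ f₁ n)
    (hf₂ : ∀ n, 0 ≤ f₂ n) (n : ℕ) :
    (f₁ * f₂).pmul g n ≤ (f₁.pmul g * f₂.pmul g) n := by
  simp only [pmul_apply, mul_apply]
  rw [Finset.sum_mul]
  refine Finset.sum_le_sum fun x hx => ?_
  rw [mul_mul_mul_comm, ← (Nat.mem_divisorsAntidiagonal.mp hx).1]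
  exact mul_le_mul_of_nonneg_left (hg.map_mul_le _ _) (mul_nonneg (hf₁ _) (hf₂ _))

end Submultiplicative

section Summability

open ArithmeticFunction

lemma summable_arithmeticFunction_mul {R : Type*} [NormedRing R] [CompleteSpace R]
    {f g : ArithmeticFunction R} (hf : Summable fun n => ‖f n‖) (hg : Summable fun n => ‖g n‖) :
    Summable (f * g) := by
  have hinj : Function.Injective
      fun x : Σ n : ℕ, n.divisorsAntidiagonal => (x.2 : ℕ × ℕ) := by
    rintro ⟨m, x, hx⟩ ⟨n, y, hy⟩ (rfl : x = y)
    obtain rfl : m = n :=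
      (Nat.mem_divisorsAntidiagonal.mp hx).1.symm.trans (Nat.mem_divisorsAntidiagonal.mp hy).1
    rfl
  refine ((summable_mul_of_summable_norm hf hg).comp_injective hinj).sigma.congr fun n => ?_
  rw [mul_apply]
  exact Finset.tsum_subtype n.divisorsAntidiagonal fun x => f x.1 * g x.2

lemma IsSubmultiplicative.summable_list_prod_pmul {g : ArithmeticFunction ℝ}
    (hg : IsSubmultiplicative g) {L : List (ArithmeticFunction ℝ)}
    (hL : ∀ f ∈ L, ∀ n, 0 ≤ f n) (hsum : ∀ f ∈ L, Summable (f.pmul g)) :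
    Summable (L.prod.pmul g) := by
  induction L with
  | nil =>
    refine summable_of_ne_finset_zero (s := {1}) fun n hn => ?_
    simp [one_apply_ne (Finset.notMem_singleton.mp hn)]
  | cons f L ih =>
    rw [List.forall_mem_cons] at hL hsum
    have hprod := arithmeticFunction_list_prod_nonneg hL.2
    rw [List.prod_cons]
    exact .of_nonneg_of_le
      (fun n => mul_nonneg (arithmeticFunction_mul_nonneg hL.1 hprod n) (hg.nonneg n))
      (hg.mul_pmul_le hL.1 hprod)
      (summable_arithmeticFunction_mul hsum.1.norm (ih hL.2 hsum.2).norm)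

variable {R : Type*} [NormedRing R]

/-- The arithmetic function `n ↦ ‖f n‖`, the pointwise companion of `ArithmeticFunction.pmul`. -/
def pnorm (f : ArithmeticFunction R) : ArithmeticFunction ℝ :=
  ⟨fun n => ‖f n‖, by simp⟩

@[simp]
lemma pnorm_apply (f : ArithmeticFunction R) (n : ℕ) : pnorm f n = ‖f n‖ := rfl

lemma pnorm_nonneg (f : ArithmeticFunction R) (n : ℕ) : 0 ≤ pnorm f n := norm_nonneg (f n)

lemma norm_list_prod_apply_le [NormOneClass R] (L : List (ArithmeticFunction R)) (n : ℕ) :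
    ‖L.prod n‖ ≤ (L.map pnorm).prod n := by
  induction L generalizing n with
  | nil => by_cases hn : n = 1 <;> simp [one_apply, hn]
  | cons f L ih =>
    simp only [List.map_cons, List.prod_cons, mul_apply]
    refine norm_sum_le_of_le _ fun x _ => (norm_mul_le _ _).trans ?_
    exact mul_le_mul_of_nonneg_left (ih _) (norm_nonneg _)

end Summability

section AbsoluteProduct

/-- `∏ i, u i` converges absolutely, in the sense that `∑ i, ‖u i - 1‖ < ∞`, and has value `a`. -/
structure HasAbsProd {ι R : Type*} [NormedCommRing R] (u : ι → R) (a : R) : Prop where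
  summable_norm_sub_one : Summable fun i => ‖u i - 1‖
  hasProd : HasProd u a

variable {ι R : Type*} [NormedCommRing R] {u v : ι → R} {a b : R}

lemma HasAbsProd.one : HasAbsProd (fun _ : ι => (1 : R)) 1 :=
  ⟨by simp, hasProd_one⟩

lemma summable_norm_mul_sub_one (hu : Summable fun i => ‖u i - 1‖)
    (hv : Summable fun i => ‖v i - 1‖) : Summable fun i => ‖u i * v i - 1‖ := by
  have hdiag : Summable fun i => ‖(u i - 1) * (v i - 1)‖ :=
    (hu.mul_norm hv).comp_injective (i := fun i => (i, i)) fun _ _ h => congrArg Prod.fst h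
  refine .of_nonneg_of_le (fun _ => norm_nonneg _) (fun i => ?_) ((hdiag.add hu).add hv)
  rw [show u i * v i - 1 = (u i - 1) * (v i - 1) + (u i - 1) + (v i - 1) by ring]
  exact norm_add₃_le

lemma HasAbsProd.mul (hu : HasAbsProd u a) (hv : HasAbsProd v b) :
    HasAbsProd (fun i => u i * v i) (a * b) :=
  ⟨summable_norm_mul_sub_one hu.summable_norm_sub_one hv.summable_norm_sub_one,
    hu.hasProd.mul hv.hasProd⟩

lemma HasAbsProd.list_prod {κ : Type*} {L : List κ} {u : κ → ι → R} {a : κ → R}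
    (h : ∀ x ∈ L, HasAbsProd (u x) (a x)) :
    HasAbsProd (fun i => (L.map fun x => u x i).prod) (L.map a).prod := by
  induction L with
  | nil => simpa using HasAbsProd.one
  | cons x L ih =>
    rw [List.forall_mem_cons] at h
    simpa only [List.map_cons, List.prod_cons] using h.1.mul (ih h.2)

lemma summable_norm_tsum_prime_pow_sub_one {E : Type*} [NormedRing E] [CompleteSpace E]
    {f : ℕ → E} (hf₁ : f 1 = 1) (hsum : Summable fun n => ‖f n‖) :
    Summable fun p : Nat.Primes => ‖∑' j, f ((p : ℕ) ^ j) - 1‖ := by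
  have hinj : Function.Injective fun x : Nat.Primes × ℕ => (x.1 : ℕ) ^ (x.2 + 1) :=
    Subtype.val_injective.comp Nat.Primes.prodNatEquiv.injective
  refine .of_nonneg_of_le (fun _ => norm_nonneg _) (fun p => ?_) (hsum.comp_injective hinj).prod
  have hp : Summable fun j => ‖f ((p : ℕ) ^ j)‖ :=
    hsum.comp_injective (Nat.pow_right_injective p.2.two_le)
  rw [hp.of_norm.tsum_eq_zero_add, pow_zero, hf₁, add_sub_cancel_left]
  exact norm_tsum_le_tsum_norm ((summable_nat_add_iff 1).mpr hp)

lemma hasAbsProd_eulerProduct [CompleteSpace R] {f : ArithmeticFunction R}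
    (hf : f.IsMultiplicative) (hsum : Summable fun n => ‖f n‖) :
    HasAbsProd (fun p : Nat.Primes => ∑' j, f ((p : ℕ) ^ j)) (∑' n, f n) :=
  ⟨summable_norm_tsum_prime_pow_sub_one hf.1 hsum, hf.eulerProduct_hasProd hsum⟩

lemma hasAbsProd_riemannZeta_inv {w : ℂ} (hw : 1 < w.re) :
    HasAbsProd (fun p : Nat.Primes => 1 - (p : ℂ) ^ (-w)) (riemannZeta w)⁻¹ where
  summable_norm_sub_one := by
    refine (Nat.Primes.summable_rpow (r := -w.re).mpr (by linarith)).congr fun p => ?_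
    rw [sub_sub_cancel_left, norm_neg, norm_natCast_cpow_of_pos p.2.pos, neg_re]
  hasProd := by
    simpa only [inv_inv] using
      (riemannZeta_eulerProduct_hasProd hw).inv₀ (riemannZeta_ne_zero_of_one_lt_re hw)

end AbsoluteProduct

section ShiftedDivisor

open ArithmeticFunction

/-- The arithmetic function `n ↦ n ^ (-a)`. The value at `0` is set to `0`, whereas
`(0 : ℂ) ^ (-a) = 1` for `a = 0`. -/
noncomputable def cpowNeg (a : ℂ) : ArithmeticFunction ℂ :=
  ⟨fun n => if n = 0 then 0 else (n : ℂ) ^ (-a), if_pos rfl⟩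

variable {a : ℂ} {n : ℕ}

lemma cpowNeg_apply (hn : n ≠ 0) : cpowNeg a n = (n : ℂ) ^ (-a) := if_neg hn

lemma cpowNeg_map_mul (a : ℂ) (m n : ℕ) : cpowNeg a (m * n) = cpowNeg a m * cpowNeg a n := by
  rcases eq_or_ne m 0 with rfl | hm
  · simp
  rcases eq_or_ne n 0 with rfl | hn
  · simp
  rw [cpowNeg_apply hm, cpowNeg_apply hn, cpowNeg_apply (mul_ne_zero hm hn), Nat.cast_mul,
    natCast_mul_natCast_cpow]

lemma cpowNeg_isMultiplicative (a : ℂ) : (cpowNeg a).IsMultiplicative :=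
  ⟨by simp [cpowNeg_apply one_ne_zero], fun _ => cpowNeg_map_mul a _ _⟩

lemma pnorm_cpowNeg_isSubmultiplicative (a : ℂ) : IsSubmultiplicative (pnorm (cpowNeg a)) where
  nonneg := pnorm_nonneg _
  map_mul_le m n := by simp [cpowNeg_map_mul]

lemma cpowNeg_add_apply (a b : ℂ) (n : ℕ) : cpowNeg (a + b) n = cpowNeg a n * cpowNeg b n := by
  rcases eq_or_ne n 0 with rfl | hn
  · simp
  rw [cpowNeg_apply hn, cpowNeg_apply hn, cpowNeg_apply hn, neg_add,
    cpow_add _ _ (Nat.cast_ne_zero.mpr hn)]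

lemma summable_pnorm_cpowNeg (ha : 1 < a.re) : Summable (pnorm (cpowNeg a)) := by
  refine .of_nonneg_of_le (pnorm_nonneg _) (fun n => ?_)
    (summable_one_div_nat_cpow.mpr ha).norm
  rcases eq_or_ne n 0 with rfl | hn
  · simp
  · simp [cpowNeg_apply hn, cpow_neg]

/-- `tauSh A` as an arithmetic function: the Dirichlet product of the `n ↦ n ^ (-α)`, `α ∈ A`. -/
noncomputable def tauArith (A : List ℂ) : ArithmeticFunction ℂ := (A.map cpowNeg).prod

lemma tauArith_apply (A : List ℂ) (n : ℕ) : tauArith A n = tauSh A n := by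
  induction A generalizing n with
  | nil => simp [tauArith, tauSh, one_apply]
  | cons a A ih =>
    rw [tauArith, List.map_cons, List.prod_cons, ← tauArith, tauSh, mul_apply,
      Nat.sum_divisorsAntidiagonal fun d e => cpowNeg a d * tauArith A e]
    refine Finset.sum_congr rfl fun d hd => ?_
    rw [cpowNeg_apply (Nat.pos_of_mem_divisors hd).ne', ih]

lemma tauArith_isMultiplicative (A : List ℂ) : (tauArith A).IsMultiplicative :=
  List.prod_induction _ (fun _ _ => IsMultiplicative.mul) isMultiplicative_one
    (List.forall_mem_map.mpr fun a _ => cpowNeg_isMultiplicative a)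

/-- The convolution of the functions `n ↦ n ^ (-ℜ α)`, `α ∈ A`, a submultiplicative majorant of
`tauArith A`. -/
noncomputable def tauMajorant (A : List ℂ) : ArithmeticFunction ℝ :=
  (A.map fun α => pnorm (cpowNeg α)).prod

lemma norm_tauArith_le (A : List ℂ) (n : ℕ) : ‖tauArith A n‖ ≤ tauMajorant A n := by
  simpa only [List.map_map] using! norm_list_prod_apply_le (A.map cpowNeg) n

lemma tauMajorant_isSubmultiplicative (A : List ℂ) : IsSubmultiplicative (tauMajorant A) :=
  .list_prod (List.forall_mem_map.mpr fun α _ => pnorm_cpowNeg_isSubmultiplicative α)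

lemma IsSubmultiplicative.summable_tauMajorant_pmul {g : ArithmeticFunction ℝ}
    (hg : IsSubmultiplicative g) {A : List ℂ}
    (hsum : ∀ α ∈ A, Summable ((pnorm (cpowNeg α)).pmul g)) :
    Summable ((tauMajorant A).pmul g) :=
  hg.summable_list_prod_pmul
    (List.forall_mem_map.mpr fun _ _ => pnorm_nonneg _) (List.forall_mem_map.mpr hsum)

/-- The arithmetic function `n ↦ τ_A(n) τ_B(n) n ^ (-s)`, whose sum is the Dirichlet series of
`τ_A τ_B` at `s`. -/
noncomputable def tauPairTerm (A B : List ℂ) (s : ℂ) : ArithmeticFunction ℂ :=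
  ((tauArith A).pmul (tauArith B)).pmul (cpowNeg s)

variable {A B : List ℂ} {s : ℂ}

lemma tauPairTerm_apply (A B : List ℂ) (s : ℂ) (n : ℕ) :
    tauPairTerm A B s n = tauSh A n * tauSh B n * (n : ℂ) ^ (-s) := by
  simp only [tauPairTerm, pmul_apply]
  rcases eq_or_ne n 0 with rfl | hn
  · simp [← tauArith_apply]
  · rw [tauArith_apply, tauArith_apply, cpowNeg_apply hn]

lemma tauPairTerm_apply_pow (A B : List ℂ) (s : ℂ) (m j : ℕ) :
    tauPairTerm A B s (m ^ j) = tauSh A (m ^ j) * tauSh B (m ^ j) * (m : ℂ) ^ (-(j : ℂ) * s) := by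
  rw [tauPairTerm_apply, Nat.cast_pow, ← natCast_cpow_natCast_mul, neg_mul, mul_neg]

lemma tauPairTerm_isMultiplicative (A B : List ℂ) (s : ℂ) :
    (tauPairTerm A B s).IsMultiplicative :=
  ((tauArith_isMultiplicative A).pmul (tauArith_isMultiplicative B)).pmul
    (cpowNeg_isMultiplicative s)

lemma summable_tauMajorant_pmul_tauMajorant (h : ∀ α ∈ A, ∀ β ∈ B, 1 < (s + α + β).re) :
    Summable ((tauMajorant A).pmul ((tauMajorant B).pmul (pnorm (cpowNeg s)))) := by
  have hs := pnorm_cpowNeg_isSubmultiplicative s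
  refine ((tauMajorant_isSubmultiplicative B).pmul hs).summable_tauMajorant_pmul fun α hα => ?_
  have hαs := (pnorm_cpowNeg_isSubmultiplicative α).pmul hs
  have hsum : Summable ((tauMajorant B).pmul ((pnorm (cpowNeg α)).pmul (pnorm (cpowNeg s)))) := by
    refine hαs.summable_tauMajorant_pmul fun β hβ =>
      (summable_pnorm_cpowNeg (h α hα β hβ)).congr fun n => ?_
    simp only [pmul_apply, pnorm_apply, cpowNeg_add_apply, norm_mul]
    ring
  exact hsum.congr fun n => mul_left_comm _ _ _

lemma summable_norm_tauPairTerm (h : ∀ α ∈ A, ∀ β ∈ B, 1 < (s + α + β).re) :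
    Summable fun n => ‖tauPairTerm A B s n‖ := by
  refine .of_nonneg_of_le (fun _ => norm_nonneg _) (fun n => ?_)
    (summable_tauMajorant_pmul_tauMajorant h)
  simp only [tauPairTerm, pmul_apply, pnorm_apply, norm_mul, mul_assoc]
  gcongr
  · exact (tauMajorant_isSubmultiplicative A).nonneg n
  · exact norm_tauArith_le A n
  · exact norm_tauArith_le B n

lemma hasAbsProd_prod_riemannZeta_inv (h : ∀ α ∈ A, ∀ β ∈ B, 1 < (s + α + β).re) :
    HasAbsProd
      (fun p : Nat.Primes => (A.map fun α => (B.map fun β => 1 - (p : ℂ) ^ (-s - α - β)).prod).prod)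
      (A.map fun α => (B.map fun β => riemannZeta (s + α + β)).prod).prod⁻¹ := by
  have key := HasAbsProd.list_prod fun α hα => HasAbsProd.list_prod fun β hβ =>
    hasAbsProd_riemannZeta_inv (h α hα β hβ)
  simpa only [List.prod_inv, List.map_map, Function.comp_def, neg_add, ← sub_eq_add_neg] using key

lemma prod_riemannZeta_ne_zero (h : ∀ α ∈ A, ∀ β ∈ B, 1 < (s + α + β).re) :
    (A.map fun α => (B.map fun β => riemannZeta (s + α + β)).prod).prod ≠ 0 := by
  simp only [ne_eq, List.prod_eq_zero_iff, List.mem_map, not_exists, not_and]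
  exact fun α hα β hβ => riemannZeta_ne_zero_of_one_lt_re (h α hα β hβ)

end ShiftedDivisor

/-- For tuples A, B and s with ℜ(s+α+β) > 1 for all α∈A, β∈B,
Σ_{n≥1} τ_A(n)τ_B(n) n^{−s} converges absolutely and equals
∏_{α,β} ζ(s+α+β) · ∏_p [ ∏_{α,β}(1 − p^{−s−α−β}) Σ_{j≥0} τ_A(p^j)τ_B(p^j) p^{−js} ],
the product over primes converging absolutely. -/
theorem stmt5 (A B : List ℂ) (s : ℂ)
    (h : ∀ α ∈ A, ∀ β ∈ B, 1 < (s + α + β).re) :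
    Summable (fun n : ℕ => ‖tauSh A n * tauSh B n * (n : ℂ) ^ (-s)‖) ∧
    Summable (fun p : Nat.Primes =>
      ‖(A.map (fun α => (B.map (fun β => 1 - ((p : ℕ) : ℂ) ^ (-s - α - β))).prod)).prod *
          (∑' j : ℕ, tauSh A ((p : ℕ) ^ j) * tauSh B ((p : ℕ) ^ j)
            * ((p : ℕ) : ℂ) ^ (-(j : ℂ) * s)) - 1‖) ∧
    ∑' n : ℕ, tauSh A n * tauSh B n * (n : ℂ) ^ (-s)
      = (A.map (fun α => (B.map (fun β => riemannZeta (s + α + β))).prod)).prod *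
        ∏' p : Nat.Primes,
          ((A.map (fun α => (B.map (fun β => 1 - ((p : ℕ) : ℂ) ^ (-s - α - β))).prod)).prod *
            ∑' j : ℕ, tauSh A ((p : ℕ) ^ j) * tauSh B ((p : ℕ) ^ j)
              * ((p : ℕ) : ℂ) ^ (-(j : ℂ) * s)) := by
  have hsum := summable_norm_tauPairTerm h
  have hprod := (hasAbsProd_prod_riemannZeta_inv h).mul
    (hasAbsProd_eulerProduct (tauPairTerm_isMultiplicative A B s) hsum)
  simp only [← tauPairTerm_apply_pow, ← tauPairTerm_apply]
  refine ⟨hsum, hprod.summable_norm_sub_one, ?_⟩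
  rw [hprod.hasProd.tprod_eq, mul_inv_cancel_left₀ (prod_riemannZeta_ne_zero h)]
end

section
/- Let A be a tuple of complex numbers with a distinguished entry α̂, and let A′ be A with that entry removed. Suppose ℜ(α̂ − α) < 1 for every entry α of A. Then for every prime p and every integer r ≥ 1, G_A(1−α̂, p^r) = ∏_{α∈A′} (1 − p^{−1+α̂−α}) · Σ_{j≥0} τ_{A′}(p^{j+r}) p^{−j(1−α̂)}. -/
open Complex

/-!
At `s = 1 - α̂` the claim reads `G_A(s, p^r) = g_{A'}(s, p^r)`. Only `d ∈ {1, p}` contribute to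
`G_A`, so for every `s`, `(p - 1) G_A(s, p^r) = p g_A(s, p^r) - p^s g_A(s, p^{r-1})`. On the other
hand `τ_A(p^{n+1}) - p^{-α̂} τ_A(p^n) = τ_{A'}(p^{n+1})` gives
`g_A(s, p^r) - p^{-α̂} g_A(s, p^{r-1}) = (1 - p^{-s-α̂}) g_{A'}(s, p^r)`. At `s = 1 - α̂` we have
`p^s = p · p^{-α̂}` and `p (1 - p^{-s-α̂}) = p - 1`, so the two identities match. For `r = 1` the
second one involves `g_A(s, 1) = 1`, which is where the Euler product for `τ_A` is needed.
-/

/-- The arithmetic function `n ↦ n^{-a}`, whose convolution products are the shifted divisor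
functions. The value at `0` is set to `0`, as `ArithmeticFunction` requires. -/
noncomputable def shiftedPow (a : ℂ) : ArithmeticFunction ℂ :=
  ⟨fun n => if n = 0 then 0 else (n : ℂ) ^ (-a), if_pos rfl⟩

lemma tauSh_eq_prod_shiftedPow (A : List ℂ) (n : ℕ) : tauSh A n = (A.map shiftedPow).prod n := by
  induction A generalizing n with
  | nil => simp [tauSh, ArithmeticFunction.one_apply]
  | cons a A ih =>
    rw [tauSh, List.map_cons, List.prod_cons, ArithmeticFunction.mul_apply,
      Nat.sum_divisorsAntidiagonal fun d e => shiftedPow a d * (A.map shiftedPow).prod e]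
    refine Finset.sum_congr rfl fun d hd => ?_
    simp [ih, shiftedPow, (Nat.pos_of_mem_divisors hd).ne']

section Perm

variable {A B : List ℂ}

lemma tauSh_perm (hAB : A.Perm B) : tauSh A = tauSh B := by
  ext n
  rw [tauSh_eq_prod_shiftedPow, tauSh_eq_prod_shiftedPow, (hAB.map _).prod_eq]

lemma gSh_perm (hAB : A.Perm B) : gSh A = gSh B := by
  ext s q
  simp only [gSh, tauSh_perm hAB, (hAB.map _).prod_eq]

lemma GSh_perm (hAB : A.Perm B) : GSh A = GSh B := by
  ext s q
  simp only [GSh, gSh_perm hAB]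

end Perm

lemma natCast_cpow_neg_natCast_mul (p j : ℕ) (s : ℂ) :
    (p : ℂ) ^ (-(j : ℂ) * s) = ((p : ℂ) ^ (-s)) ^ j := by
  rw [neg_mul, ← mul_neg, cpow_nat_mul]

section PrimePow

variable {A : List ℂ} {a s : ℂ} {p : ℕ}

lemma tauSh_cons_prime_pow (hp : p.Prime) (a : ℂ) (A : List ℂ) (n : ℕ) :
    tauSh (a :: A) (p ^ n) =
      ∑ i ∈ Finset.range (n + 1), ((p : ℂ) ^ (-a)) ^ i * tauSh A (p ^ (n - i)) := by
  rw [tauSh, Nat.sum_divisors_prime_pow hp]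
  refine Finset.sum_congr rfl fun i hi => ?_
  rw [Nat.pow_div (Finset.mem_range_succ_iff.mp hi) hp.pos, Nat.cast_pow, ← cpow_nat_mul,
    ← natCast_cpow_natCast_mul]

lemma tauSh_cons_prime_pow_succ (hp : p.Prime) (a : ℂ) (A : List ℂ) (n : ℕ) :
    tauSh (a :: A) (p ^ (n + 1)) =
      (p : ℂ) ^ (-a) * tauSh (a :: A) (p ^ n) + tauSh A (p ^ (n + 1)) := by
  rw [tauSh_cons_prime_pow hp, tauSh_cons_prime_pow hp, Finset.sum_range_succ', Finset.mul_sum]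
  simp only [Nat.add_sub_add_right, pow_succ' ((p : ℂ) ^ (-a)), mul_assoc, pow_zero, one_mul,
    Nat.sub_zero]

lemma tauSh_cons_prime_pow_mul_cpow (hp : p.Prime) (a : ℂ) (A : List ℂ) (s : ℂ) (n : ℕ) :
    tauSh (a :: A) (p ^ n) * (p : ℂ) ^ (-(n : ℂ) * s) =
      ∑ i ∈ Finset.range (n + 1), ((p : ℂ) ^ (-s - a)) ^ i *
        (tauSh A (p ^ (n - i)) * (p : ℂ) ^ (-((n - i : ℕ) : ℂ) * s)) := by
  have hp0 : (p : ℂ) ≠ 0 := Nat.cast_ne_zero.mpr hp.ne_zero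
  rw [tauSh_cons_prime_pow hp, Finset.sum_mul]
  refine Finset.sum_congr rfl fun i hi => ?_
  obtain ⟨k, rfl⟩ := Nat.exists_eq_add_of_le (Finset.mem_range_succ_iff.mp hi)
  simp only [natCast_cpow_neg_natCast_mul, Nat.add_sub_cancel_left, sub_eq_add_neg (-s),
    cpow_add _ _ hp0]
  ring

lemma norm_natCast_cpow_neg_sub_lt_one (hp : 1 < p) (ha : 0 < (s + a).re) :
    ‖(p : ℂ) ^ (-s - a)‖ < 1 := by
  rw [norm_natCast_cpow_of_pos (by lia)]
  refine Real.rpow_lt_one_of_one_lt_of_neg (by exact_mod_cast hp) ?_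
  simp only [add_re, sub_re, neg_re] at ha ⊢
  linarith

lemma summable_norm_natCast_cpow_pow (hp : 1 < p) (ha : 0 < (s + a).re) :
    Summable fun j : ℕ => ‖((p : ℂ) ^ (-s - a)) ^ j‖ := by
  simpa only [norm_pow] using
    summable_geometric_of_lt_one (norm_nonneg _) (norm_natCast_cpow_neg_sub_lt_one hp ha)

lemma tauSh_nil_pow (hp : 1 < p) {j : ℕ} (hj : j ≠ 0) : tauSh [] (p ^ j) = 0 :=
  if_neg (Nat.one_lt_pow hj hp).ne'

lemma summable_norm_tauSh_prime_pow (hp : p.Prime) (hA : ∀ a ∈ A, 0 < (s + a).re) :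
    Summable fun j : ℕ => ‖tauSh A (p ^ j) * (p : ℂ) ^ (-(j : ℂ) * s)‖ := by
  induction A with
  | nil =>
    refine summable_of_ne_finset_zero (s := {0}) fun j hj => ?_
    rw [tauSh_nil_pow hp.one_lt (by simpa using hj), zero_mul, norm_zero]
  | cons a A ih =>
    rw [List.forall_mem_cons] at hA
    simp only [tauSh_cons_prime_pow_mul_cpow hp a A]
    exact summable_norm_sum_mul_range_of_summable_norm
      (g := fun j : ℕ => tauSh A (p ^ j) * (p : ℂ) ^ (-(j : ℂ) * s))
      (summable_norm_natCast_cpow_pow hp.one_lt hA.1) (ih hA.2)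

lemma prod_mul_tsum_tauSh_prime_pow (hp : p.Prime) (hA : ∀ a ∈ A, 0 < (s + a).re) :
    (A.map fun a => 1 - (p : ℂ) ^ (-s - a)).prod *
      ∑' j : ℕ, tauSh A (p ^ j) * (p : ℂ) ^ (-(j : ℂ) * s) = 1 := by
  induction A with
  | nil =>
    rw [tsum_eq_single 0 fun j hj => by rw [tauSh_nil_pow hp.one_lt hj, zero_mul]]
    simp [tauSh]
  | cons a A ih =>
    rw [List.forall_mem_cons] at hA
    have ha : ‖(p : ℂ) ^ (-s - a)‖ < 1 := norm_natCast_cpow_neg_sub_lt_one hp.one_lt hA.1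
    have hne : 1 - (p : ℂ) ^ (-s - a) ≠ 0 := by
      rw [sub_ne_zero]
      intro h1
      simp [← h1] at ha
    simp only [tauSh_cons_prime_pow_mul_cpow hp a A]
    rw [← tsum_mul_tsum_eq_tsum_sum_range_of_summable_norm
        (summable_norm_natCast_cpow_pow hp.one_lt hA.1) (summable_norm_tauSh_prime_pow hp hA.2),
      tsum_geometric_of_norm_lt_one ha, List.map_cons, List.prod_cons, mul_mul_mul_comm,
      mul_inv_cancel₀ hne, one_mul, ih hA.2]

lemma summable_tauSh_prime_pow_add (hp : p.Prime) (hA : ∀ a ∈ A, 0 < (s + a).re) (n : ℕ) :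
    Summable fun j : ℕ => tauSh A (p ^ (j + n)) * (p : ℂ) ^ (-(j : ℂ) * s) := by
  have hx : (p : ℂ) ^ (-s) ≠ 0 :=
    cpow_ne_zero_iff.mpr (.inl (Nat.cast_ne_zero.mpr hp.ne_zero))
  have shifted := (summable_nat_add_iff n).mpr (summable_norm_tauSh_prime_pow hp hA).of_norm
  refine (shifted.mul_right (((p : ℂ) ^ (-s)) ^ n)⁻¹).congr fun j => ?_
  rw [natCast_cpow_neg_natCast_mul, natCast_cpow_neg_natCast_mul, pow_add ((p : ℂ) ^ (-s)),
    ← mul_assoc, mul_inv_cancel_right₀ (pow_ne_zero n hx)]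

lemma gSh_prime_pow_of_ne_zero (hp : p.Prime) (A : List ℂ) (s : ℂ) {n : ℕ} (hn : n ≠ 0) :
    gSh A s (p ^ n) = (A.map fun a => 1 - (p : ℂ) ^ (-s - a)).prod *
      ∑' j : ℕ, tauSh A (p ^ (j + n)) * (p : ℂ) ^ (-(j : ℂ) * s) := by
  rw [gSh, Nat.primeFactors_prime_pow hn hp, Finset.prod_singleton, hp.factorization_pow,
    Finsupp.single_eq_same]

lemma gSh_prime_pow (hp : p.Prime) (hA : ∀ a ∈ A, 0 < (s + a).re) (n : ℕ) :
    gSh A s (p ^ n) = (A.map fun a => 1 - (p : ℂ) ^ (-s - a)).prod *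
      ∑' j : ℕ, tauSh A (p ^ (j + n)) * (p : ℂ) ^ (-(j : ℂ) * s) := by
  rcases eq_or_ne n 0 with rfl | hn
  · simpa [gSh] using (prod_mul_tsum_tauSh_prime_pow hp hA).symm
  · exact gSh_prime_pow_of_ne_zero hp A s hn

lemma tsum_tauSh_prime_pow_succ (hp : p.Prime) (hA : ∀ b ∈ a :: A, 0 < (s + b).re) (n : ℕ) :
    ∑' j : ℕ, tauSh A (p ^ (j + (n + 1))) * (p : ℂ) ^ (-(j : ℂ) * s) =
      ∑' j : ℕ, tauSh (a :: A) (p ^ (j + (n + 1))) * (p : ℂ) ^ (-(j : ℂ) * s) -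
        (p : ℂ) ^ (-a) * ∑' j : ℕ, tauSh (a :: A) (p ^ (j + n)) * (p : ℂ) ^ (-(j : ℂ) * s) := by
  rw [← tsum_mul_left, ← (summable_tauSh_prime_pow_add hp hA (n + 1)).tsum_sub
    ((summable_tauSh_prime_pow_add hp hA n).mul_left _)]
  refine tsum_congr fun j => ?_
  rw [← add_assoc, tauSh_cons_prime_pow_succ hp]
  ring

lemma one_sub_cpow_mul_gSh_prime_pow_succ (hp : p.Prime) (hA : ∀ b ∈ a :: A, 0 < (s + b).re)
    (n : ℕ) :
    (1 - (p : ℂ) ^ (-s - a)) * gSh A s (p ^ (n + 1)) =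
      gSh (a :: A) s (p ^ (n + 1)) - (p : ℂ) ^ (-a) * gSh (a :: A) s (p ^ n) := by
  rw [gSh_prime_pow hp (List.forall_mem_cons.mp hA).2, gSh_prime_pow hp hA, gSh_prime_pow hp hA,
    tsum_tauSh_prime_pow_succ hp hA, List.map_cons, List.prod_cons]
  ring

lemma GSh_prime_pow_succ (hp : p.Prime) (A : List ℂ) (s : ℂ) (n : ℕ) :
    GSh A s (p ^ (n + 1)) =
      gSh A s (p ^ (n + 1)) -
        (p : ℂ) ^ s / (p - 1) * (gSh A s (p ^ n) - gSh A s (p ^ (n + 1)) / (p : ℂ) ^ s) := by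
  have moebius_eq_zero (i : ℕ) : (ArithmeticFunction.moebius (p ^ (i + 1 + 1)) : ℂ) = 0 := by
    simp [ArithmeticFunction.moebius_apply_prime_pow hp]
  rw [GSh, Nat.sum_divisors_prime_pow hp, Finset.sum_range_succ', Finset.sum_range_succ',
    Finset.sum_eq_zero fun i _ => by rw [moebius_eq_zero i, zero_div, zero_mul, zero_mul]]
  simp only [zero_add, pow_zero, pow_one, Nat.divisors_one, Finset.sum_singleton,
    hp.sum_divisors, ArithmeticFunction.moebius_apply_prime hp, Nat.totient_prime hp,
    Nat.totient_one, ArithmeticFunction.moebius_apply_one, Nat.cast_one, one_cpow,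
    Nat.cast_sub hp.one_le, mul_one, Nat.div_one, pow_succ p n, Nat.mul_div_cancel _ hp.pos]
  push_cast
  ring

lemma sub_one_mul_GSh_prime_pow_succ (hp : p.Prime) (A : List ℂ) (s : ℂ) (n : ℕ) :
    ((p : ℂ) - 1) * GSh A s (p ^ (n + 1)) =
      p * gSh A s (p ^ (n + 1)) - (p : ℂ) ^ s * gSh A s (p ^ n) := by
  have hp1 : (p : ℂ) - 1 ≠ 0 := sub_ne_zero.mpr (by exact_mod_cast hp.ne_one)
  have hps : (p : ℂ) ^ s ≠ 0 :=
    cpow_ne_zero_iff.mpr (.inl (Nat.cast_ne_zero.mpr hp.ne_zero))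
  rw [GSh_prime_pow_succ hp]
  field_simp
  ring

theorem GSh_cons_one_sub_prime_pow_succ (hp : p.Prime) (hA : ∀ b ∈ A, (a - b).re < 1) (n : ℕ) :
    GSh (a :: A) (1 - a) (p ^ (n + 1)) = gSh A (1 - a) (p ^ (n + 1)) := by
  have hp0 : (p : ℂ) ≠ 0 := Nat.cast_ne_zero.mpr hp.ne_zero
  have hp1 : (p : ℂ) - 1 ≠ 0 := sub_ne_zero.mpr (by exact_mod_cast hp.ne_one)
  have convergent : ∀ b ∈ a :: A, 0 < (1 - a + b).re := by
    refine List.forall_mem_cons.mpr ⟨by simp, fun b hb => ?_⟩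
    have := hA b hb
    simp only [add_re, sub_re, one_re] at this ⊢
    linarith
  have cpow_one_sub : (p : ℂ) ^ (1 - a) = p * (p : ℂ) ^ (-a) := by
    rw [sub_eq_add_neg, cpow_add _ _ hp0, cpow_one]
  have p_mul_one_sub : (p : ℂ) * (1 - (p : ℂ) ^ (-(1 - a) - a)) = p - 1 := by
    rw [show -(1 - a) - a = -1 by ring, cpow_neg_one, mul_sub, mul_inv_cancel₀ hp0, mul_one]
  apply mul_left_cancel₀ hp1
  calc ((p : ℂ) - 1) * GSh (a :: A) (1 - a) (p ^ (n + 1))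
      = p * (gSh (a :: A) (1 - a) (p ^ (n + 1)) -
          (p : ℂ) ^ (-a) * gSh (a :: A) (1 - a) (p ^ n)) := by
        rw [sub_one_mul_GSh_prime_pow_succ hp, cpow_one_sub]
        ring
    _ = p * (1 - (p : ℂ) ^ (-(1 - a) - a)) * gSh A (1 - a) (p ^ (n + 1)) := by
        rw [← one_sub_cpow_mul_gSh_prime_pow_succ hp convergent, mul_assoc]
    _ = (p - 1) * gSh A (1 - a) (p ^ (n + 1)) := by rw [p_mul_one_sub]

end PrimePow

/-- Let A have distinguished entry α̂, A′ = A minus α̂, and suppose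
ℜ(α̂ − α) < 1 for every entry α of A. Then for every prime p and r ≥ 1,
G_A(1−α̂, p^r) = ∏_{α∈A′}(1 − p^{−1+α̂−α}) · Σ_{j≥0} τ_{A′}(p^{j+r}) p^{−j(1−α̂)}. -/
theorem stmt7 (L₁ L₂ : List ℂ) (αh : ℂ)
    (h : ∀ α ∈ L₁ ++ αh :: L₂, (αh - α).re < 1)
    (p : ℕ) (hp : p.Prime) (r : ℕ) (hr : 1 ≤ r) :
    GSh (L₁ ++ αh :: L₂) (1 - αh) (p ^ r)
      = ((L₁ ++ L₂).map (fun α => 1 - (p : ℂ) ^ (-1 + αh - α))).prod *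
          ∑' j : ℕ, tauSh (L₁ ++ L₂) (p ^ (j + r)) * (p : ℂ) ^ (-(j : ℂ) * (1 - αh)) := by
  obtain ⟨n, rfl⟩ := Nat.exists_eq_add_of_le' hr
  have middle_first : (L₁ ++ αh :: L₂).Perm (αh :: (L₁ ++ L₂)) := List.perm_middle
  have convergent : ∀ α ∈ L₁ ++ L₂, (αh - α).re < 1 := fun α hα =>
    h α (middle_first.mem_iff.mpr (List.mem_cons_of_mem _ hα))
  rw [GSh_perm middle_first, GSh_cons_one_sub_prime_pow_succ hp convergent,
    gSh_prime_pow_of_ne_zero hp _ _ n.succ_ne_zero, neg_sub', sub_neg_eq_add]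
end

section
/- Let A be a tuple of complex numbers with a distinguished entry α̂ satisfying ℜ(α̂ − α) < 1 for every entry α of A. Then for every prime p, G_A(1−α̂, p) = (p/(p−1)) · ( g_A(1−α̂, p) − p^{−α̂} ). -/
open Complex

/-
For prime `p` only `d = 1` and `d = p` contribute to `G_A(s, p)`, and `g_A(s, 1) = 1`. The factor
`p^s` of the term `d = p` cancels the `p^{-s}` of its inner term `e = p`, so the two copies of
`g_A(s, p)` combine with coefficient `1 + 1 / (p - 1) = p / (p - 1)`, leaving `-p^s / (p - 1)`.
-/

theorem gSh_one (A : List ℂ) (s : ℂ) : gSh A s 1 = 1 := by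
  simp [gSh]

theorem GSh_prime (A : List ℂ) (s : ℂ) {p : ℕ} (hp : p.Prime) :
    GSh A s p
      = gSh A s p - (p : ℂ) ^ s / ((p : ℂ) - 1) * (1 - gSh A s p / (p : ℂ) ^ s) := by
  have totient_cast : (Nat.totient p : ℂ) = (p : ℂ) - 1 := by
    rw [Nat.totient_prime hp, Nat.cast_pred hp.pos]
  rw [GSh, hp.sum_divisors, hp.sum_divisors]
  simp only [Nat.divisors_one, Finset.sum_singleton, ArithmeticFunction.moebius_apply_prime hp,
    ArithmeticFunction.moebius_apply_one, totient_cast, Nat.totient_one, mul_one, Nat.div_one,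
    Nat.mul_div_cancel _ hp.pos, Nat.div_self hp.pos, gSh_one, Nat.cast_one, one_cpow,
    Int.cast_neg, Int.cast_one]
  ring

theorem stmt8_general (A : List ℂ) (s : ℂ) {p : ℕ} (hp : p.Prime) :
    GSh A s p = ((p : ℂ) / ((p : ℂ) - 1)) * (gSh A s p - (p : ℂ) ^ (s - 1)) := by
  have hp0 : (p : ℂ) ≠ 0 := Nat.cast_ne_zero.mpr hp.ne_zero
  have hp1 : (p : ℂ) - 1 ≠ 0 := sub_ne_zero.mpr (Nat.cast_ne_one.mpr hp.ne_one)
  have hps : (p : ℂ) ^ s ≠ 0 := fun h => hp0 ((cpow_eq_zero_iff _ _).mp h).1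
  rw [GSh_prime A s hp, cpow_sub _ _ hp0, cpow_one]
  field_simp
  ring

/-- Let A have a distinguished entry α̂ with ℜ(α̂ − α) < 1 for every entry
α of A. Then for every prime p, G_A(1−α̂, p) = (p/(p−1)) (g_A(1−α̂, p) − p^{−α̂}). -/
theorem stmt8 (A : List ℂ) (αh : ℂ) (hmem : αh ∈ A)
    (h : ∀ α ∈ A, (αh - α).re < 1) (p : ℕ) (hp : p.Prime) :
    GSh A (1 - αh) p
      = ((p : ℂ) / ((p : ℂ) - 1)) * (gSh A (1 - αh) p - (p : ℂ) ^ (-αh)) := by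
  rw [stmt8_general A (1 - αh) hp, sub_sub_cancel_left]
end

section
/- Let A′ and B′ be tuples of complex numbers and β̂ a complex number, all of whose real parts have absolute value less than 1/4, and let p be a prime. Then Σ_{d≥0} (τ_{A′}(p^d)/p^d) Σ_{j≥0} τ_{B′}(p^{j+d}) p^{−j(1−β̂)} = Σ_{r≥0} τ_{B′}(p^r) τ_{A′∪{−β̂}}(p^r) p^{−r}, both double series converging absolutely. -/
open Complex

/-!
At a prime `p`, the generating series `∑ τ_A(pⁿ) Xⁿ` is the product of the geometric series of
ratios `p ^ (-α)`, `α ∈ A`, so that `τ_{A ∪ C}(pʳ)` is the Cauchy product of `τ_A` and `τ_C` on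
powers of `p`. Grouping the double series by `r = d + j`, with `C = {-β̂}`, gives the identity.

For absolute convergence, let `x` and `y` bound `|p ^ (-α)|` for `α ∈ A ∪ C` and `|p ^ (-β)|` for
`β ∈ B`. The terms with `d + j = r` have absolute sum at most a power of `r + 1` times
`(x * y / p) ^ r`, and `x * y < p` can be achieved as soon as `-1 < Re (α + β)` for all such
`α`, `β`.
-/

open Finset PowerSeries
open scoped NNReal

section Antidiagonal

variable {ι : Type*} [AddMonoid ι] [HasAntidiagonal ι]

lemma tsum_prod_eq_tsum_sum_antidiagonal {M : Type*} [AddCommMonoid M] [TopologicalSpace M]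
    [ContinuousAdd M] [T3Space M] {f : ι × ι → M} (hf : Summable f) :
    ∑' x, f x = ∑' n, ∑ x ∈ antidiagonal n, f x := by
  let e := HasAntidiagonal.sigmaAntidiagonalEquivProd (A := ι)
  calc ∑' x, f x = ∑' x, (f ∘ e) x := (e.tsum_eq f).symm
    _ = ∑' n, ∑' x : antidiagonal n, f (x : ι × ι) :=
      (e.summable_iff.2 hf).tsum_sigma' fun _ => .of_finite
    _ = ∑' n, ∑ x ∈ antidiagonal n, f x := tsum_congr fun n => (antidiagonal n).tsum_subtype f

lemma summable_prod_iff_summable_sum_antidiagonal {f : ι × ι → ℝ≥0} :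
    Summable f ↔ Summable fun n => ∑ x ∈ antidiagonal n, f x := by
  let e := HasAntidiagonal.sigmaAntidiagonalEquivProd (A := ι)
  calc Summable f ↔ Summable (f ∘ e) := e.summable_iff.symm
    _ ↔ Summable fun n => ∑' x : antidiagonal n, f (x : ι × ι) := by
      rw [NNReal.summable_sigma, and_iff_right fun _ => .of_finite]
      rfl
    _ ↔ Summable fun n => ∑ x ∈ antidiagonal n, f x :=
      summable_congr fun n => (antidiagonal n).tsum_subtype f

lemma sum_antidiagonal_mul_mul_apply_add {R : Type*} [NonUnitalNonAssocSemiring R]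
    (u v w : ι → R) (n : ι) :
    ∑ x ∈ antidiagonal n, u x.1 * v x.2 * w (x.1 + x.2) =
      (∑ x ∈ antidiagonal n, u x.1 * v x.2) * w n := by
  rw [sum_mul]
  exact sum_congr rfl fun x hx => by rw [mem_antidiagonal.1 hx]

end Antidiagonal

section PolynomialGeometric

variable {x y : ℝ≥0} {k l : ℕ}

lemma sum_antidiagonal_mul_le_succ_pow_mul_pow {u v : ℕ → ℝ≥0}
    (hu : ∀ n, u n ≤ (n + 1) ^ k * x ^ n) (hv : ∀ n, v n ≤ (n + 1) ^ l * x ^ n) (n : ℕ) :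
    ∑ i ∈ antidiagonal n, u i.1 * v i.2 ≤ (n + 1) ^ (k + l + 1) * x ^ n := by
  have term_le : ∀ i ∈ antidiagonal n, u i.1 * v i.2 ≤ (n + 1) ^ (k + l) * x ^ n := by
    intro i hi
    have hi₁ : (i.1 : ℝ≥0) ≤ n := Nat.cast_le.2 (HasAntidiagonal.antidiagonal.fst_le hi)
    have hi₂ : (i.2 : ℝ≥0) ≤ n := Nat.cast_le.2 (HasAntidiagonal.antidiagonal.snd_le hi)
    calc u i.1 * v i.2
        ≤ ((i.1 + 1) ^ k * x ^ i.1) * ((i.2 + 1) ^ l * x ^ i.2) := mul_le_mul' (hu _) (hv _)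
      _ ≤ ((n + 1) ^ k * x ^ i.1) * ((n + 1) ^ l * x ^ i.2) := by gcongr
      _ = (n + 1) ^ (k + l) * x ^ n := by rw [← mem_antidiagonal.1 hi]; ring
  calc ∑ i ∈ antidiagonal n, u i.1 * v i.2
      ≤ #(antidiagonal n) • ((n + 1) ^ (k + l) * x ^ n) := sum_le_card_nsmul _ _ _ term_le
    _ = (n + 1) ^ (k + l + 1) * x ^ n := by
      rw [Nat.card_antidiagonal, nsmul_eq_mul]
      push_cast
      ring

lemma summable_succ_pow_mul_geometric (k : ℕ) (hx : x < 1) :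
    Summable fun n : ℕ => ((n : ℝ≥0) + 1) ^ k * x ^ n := by
  have summable_descFactorial : Summable fun n : ℕ => ((n + k).descFactorial k : ℝ≥0) * x ^ n := by
    have := summable_descFactorial_mul_geometric_of_norm_lt_one (R := ℝ) k (r := x) (by simpa)
    exact_mod_cast this
  refine NNReal.summable_of_le (fun n => ?_) summable_descFactorial
  have succ_pow_le : (n + 1) ^ k ≤ (n + k).descFactorial k := by
    simpa [Nat.add_right_comm n k 1] using Nat.pow_sub_le_descFactorial (n + k) k
  gcongr
  exact_mod_cast succ_pow_le

lemma summable_mul_div_pow_of_le {u v : ℕ → ℝ≥0} {q : ℝ≥0}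
    (hu : ∀ n, u n ≤ (n + 1) ^ k * x ^ n) (hv : ∀ n, v n ≤ (n + 1) ^ l * y ^ n)
    (hxy : x * y < q) :
    Summable fun n => u n * (v n / q ^ n) := by
  refine NNReal.summable_of_le (fun n => ?_)
    (summable_succ_pow_mul_geometric (k + l) (NNReal.div_lt_one_of_lt hxy))
  calc u n * (v n / q ^ n)
      ≤ ((n + 1) ^ k * x ^ n) * (((n + 1) ^ l * y ^ n) / q ^ n) := by
        gcongr
        exacts [hu n, hv n]
    _ = (n + 1) ^ (k + l) * (x * y / q) ^ n := by ring

end PolynomialGeometric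

lemma exists_bounds_mul_lt {ι κ : Type*} (s : Finset ι) (t : Finset κ) (f : ι → ℝ≥0)
    (g : κ → ℝ≥0) {q : ℝ≥0} (hq : 0 < q) (h : ∀ i ∈ s, ∀ j ∈ t, f i * g j < q) :
    ∃ x y, (∀ i ∈ s, f i ≤ x) ∧ (∀ j ∈ t, g j ≤ y) ∧ x * y < q := by
  refine ⟨s.sup f, t.sup g, fun _ => le_sup, fun _ => le_sup, ?_⟩
  simp_rw [NNReal.finset_sup_mul, NNReal.mul_finset_sup]
  exact (Finset.sup_lt_iff hq).2 fun i hi => (Finset.sup_lt_iff hq).2 (h i hi)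

lemma nnnorm_natCast_cpow_neg_mul_lt {n : ℕ} (hn : 1 < n) {α β : ℂ} (h : -1 < (α + β).re) :
    ‖(n : ℂ) ^ (-α)‖₊ * ‖(n : ℂ) ^ (-β)‖₊ < n := by
  have n_pos : 0 < n := Nat.zero_lt_of_lt hn
  have re_lt : (-α + -β).re < 1 := by
    rw [← neg_add, neg_re]
    linarith
  rw [← NNReal.coe_lt_coe, ← nnnorm_mul, ← cpow_add _ _ (Nat.cast_ne_zero.2 n_pos.ne'),
    coe_nnnorm, norm_natCast_cpow_of_pos n_pos, NNReal.coe_natCast]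
  simpa using Real.rpow_lt_rpow_of_exponent_lt (Nat.one_lt_cast.2 hn) re_lt

lemma cpow_neg_natCast_mul_one_sub {z : ℂ} (hz : z ≠ 0) (b : ℂ) (j : ℕ) :
    z ^ (-(j : ℂ) * (1 - b)) = (z ^ b) ^ j / z ^ j := by
  rw [show -(j : ℂ) * (1 - b) = j * b - j by ring, cpow_sub _ _ hz, cpow_nat_mul, cpow_natCast]

/-- The Euler factor at a prime `p` of the Dirichlet series of `τ_A`, as a formal power
series in `X = p ^ (-s)`. -/
noncomputable def tauSeries (p : ℕ) (A : List ℂ) : ℂ⟦X⟧ :=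
  PowerSeries.mk fun n => tauSh A (p ^ n)

section PrimePowers

variable {p : ℕ}

lemma tauSeries_nil (hp : p.Prime) : tauSeries p [] = 1 := by
  ext n
  simp [tauSeries, coeff_one, tauSh, hp.ne_one]

lemma tauSeries_cons (hp : p.Prime) (a : ℂ) (A : List ℂ) :
    tauSeries p (a :: A) = PowerSeries.mk (fun n => ((p : ℂ) ^ (-a)) ^ n) * tauSeries p A := by
  ext n
  simp only [tauSeries, coeff_mul, coeff_mk, tauSh]
  rw [Nat.divisors_prime_pow hp, sum_map,
    Nat.sum_antidiagonal_eq_sum_range_succ fun i j => ((p : ℂ) ^ (-a)) ^ i * tauSh A (p ^ j)]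
  refine sum_congr rfl fun i hi => ?_
  have hin : i ≤ n := mem_range_succ_iff.1 hi
  rw [Function.Embedding.coeFn_mk, Nat.pow_div hin hp.pos, Nat.cast_pow,
    ← natCast_cpow_natCast_mul, cpow_nat_mul]

lemma tauSeries_eq_prod (hp : p.Prime) (A : List ℂ) :
    tauSeries p A = (A.map fun a => PowerSeries.mk fun n => ((p : ℂ) ^ (-a)) ^ n).prod := by
  induction A with
  | nil => exact tauSeries_nil hp
  | cons a A ih => rw [tauSeries_cons hp, ih, List.map_cons, List.prod_cons]

lemma tauSeries_append (hp : p.Prime) (A C : List ℂ) :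
    tauSeries p (A ++ C) = tauSeries p A * tauSeries p C := by
  simp only [tauSeries_eq_prod hp, List.map_append, List.prod_append]

lemma tauSh_append_prime_pow (hp : p.Prime) (A C : List ℂ) (n : ℕ) :
    tauSh (A ++ C) (p ^ n) = ∑ x ∈ antidiagonal n, tauSh A (p ^ x.1) * tauSh C (p ^ x.2) := by
  simpa only [tauSeries, coeff_mul, coeff_mk] using congrArg (coeff n) (tauSeries_append hp A C)

lemma tauSh_singleton_prime_pow (hp : p.Prime) (a : ℂ) (n : ℕ) :
    tauSh [a] (p ^ n) = ((p : ℂ) ^ (-a)) ^ n := by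
  simpa [tauSeries] using congrArg (coeff n) (tauSeries_eq_prod hp [a])

lemma nnnorm_tauSh_prime_pow_le (hp : p.Prime) {A : List ℂ} {x : ℝ≥0}
    (hx : ∀ a ∈ A, ‖(p : ℂ) ^ (-a)‖₊ ≤ x) (n : ℕ) :
    ‖tauSh A (p ^ n)‖₊ ≤ (n + 1) ^ A.length * x ^ n := by
  induction A generalizing n with
  | nil => cases n <;> simp [tauSh, hp.ne_one]
  | cons a A ih =>
    obtain ⟨ha, hA⟩ := List.forall_mem_cons.1 hx
    have singleton_le (i : ℕ) : ‖tauSh [a] (p ^ i)‖₊ ≤ (i + 1) ^ 0 * x ^ i := by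
      rw [tauSh_singleton_prime_pow hp, nnnorm_pow, pow_zero, one_mul]
      gcongr
    calc ‖tauSh (a :: A) (p ^ n)‖₊
        ≤ ∑ i ∈ antidiagonal n, ‖tauSh [a] (p ^ i.1)‖₊ * ‖tauSh A (p ^ i.2)‖₊ := by
          rw [← List.singleton_append, tauSh_append_prime_pow hp]
          simpa only [nnnorm_mul] using nnnorm_sum_le (antidiagonal n)
            fun i => tauSh [a] (p ^ i.1) * tauSh A (p ^ i.2)
      _ ≤ (n + 1) ^ (0 + A.length + 1) * x ^ n :=
          sum_antidiagonal_mul_le_succ_pow_mul_pow singleton_le (ih hA) n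
      _ = (n + 1) ^ (a :: A).length * x ^ n := by rw [zero_add, List.length_cons]

section Convolution

variable {A B C : List ℂ}

lemma summable_sum_antidiagonal_nnnorm_tauSh (hp : p.Prime)
    (h : ∀ α ∈ A ++ C, ∀ β ∈ B, -1 < (α + β).re) :
    Summable fun n : ℕ =>
      (∑ x ∈ antidiagonal n, ‖tauSh A (p ^ x.1)‖₊ * ‖tauSh C (p ^ x.2)‖₊) *
        (‖tauSh B (p ^ n)‖₊ / (p : ℝ≥0) ^ n) := by
  obtain ⟨x, y, hx, hy, hxy⟩ := exists_bounds_mul_lt (A ++ C).toFinset B.toFinset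
    (fun α => ‖(p : ℂ) ^ (-α)‖₊) (fun β => ‖(p : ℂ) ^ (-β)‖₊) (Nat.cast_pos.2 hp.pos)
    fun α hα β hβ => nnnorm_natCast_cpow_neg_mul_lt hp.one_lt
      (h α (List.mem_toFinset.1 hα) β (List.mem_toFinset.1 hβ))
  simp only [List.mem_toFinset, List.forall_mem_append] at hx hy
  exact summable_mul_div_pow_of_le (sum_antidiagonal_mul_le_succ_pow_mul_pow
    (nnnorm_tauSh_prime_pow_le hp hx.1) (nnnorm_tauSh_prime_pow_le hp hx.2))
    (nnnorm_tauSh_prime_pow_le hp hy) hxy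

lemma summable_norm_tauSh_mul_mul (hp : p.Prime)
    (h : ∀ α ∈ A ++ C, ∀ β ∈ B, -1 < (α + β).re) :
    Summable fun x : ℕ × ℕ => ‖tauSh A (p ^ x.1) * tauSh C (p ^ x.2) *
      (tauSh B (p ^ (x.1 + x.2)) / (p : ℂ) ^ (x.1 + x.2))‖ := by
  suffices Summable fun x : ℕ × ℕ => ‖tauSh A (p ^ x.1)‖₊ * ‖tauSh C (p ^ x.2)‖₊ *
      (‖tauSh B (p ^ (x.1 + x.2))‖₊ / (p : ℝ≥0) ^ (x.1 + x.2)) by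
    simpa using NNReal.summable_coe.2 this
  rw [summable_prod_iff_summable_sum_antidiagonal]
  simpa only [sum_antidiagonal_mul_mul_apply_add (fun d => ‖tauSh A (p ^ d)‖₊)
    (fun j => ‖tauSh C (p ^ j)‖₊) fun n => ‖tauSh B (p ^ n)‖₊ / (p : ℝ≥0) ^ n]
    using summable_sum_antidiagonal_nnnorm_tauSh hp h

lemma summable_norm_tauSh_mul_tauSh_append (hp : p.Prime)
    (h : ∀ α ∈ A ++ C, ∀ β ∈ B, -1 < (α + β).re) :
    Summable fun r : ℕ => ‖tauSh B (p ^ r) * tauSh (A ++ C) (p ^ r) / (p : ℂ) ^ r‖ := by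
  suffices Summable fun r : ℕ => ‖tauSh B (p ^ r) * tauSh (A ++ C) (p ^ r) / (p : ℂ) ^ r‖₊ from
    NNReal.summable_coe.2 this
  refine NNReal.summable_of_le (fun r => ?_) (summable_sum_antidiagonal_nnnorm_tauSh hp h)
  rw [mul_comm, mul_div_assoc, nnnorm_mul, nnnorm_div, nnnorm_pow, nnnorm_natCast,
    tauSh_append_prime_pow hp]
  gcongr
  simpa only [nnnorm_mul] using nnnorm_sum_le (antidiagonal r)
    fun x => tauSh A (p ^ x.1) * tauSh C (p ^ x.2)

lemma tsum_tsum_tauSh_mul_mul (hp : p.Prime)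
    (h : ∀ α ∈ A ++ C, ∀ β ∈ B, -1 < (α + β).re) :
    ∑' d : ℕ, ∑' j : ℕ, tauSh A (p ^ d) * tauSh C (p ^ j) *
        (tauSh B (p ^ (d + j)) / (p : ℂ) ^ (d + j)) =
      ∑' r : ℕ, tauSh B (p ^ r) * tauSh (A ++ C) (p ^ r) / (p : ℂ) ^ r := by
  have summable := (summable_norm_tauSh_mul_mul hp h).of_norm
  rw [← summable.tsum_prod, tsum_prod_eq_tsum_sum_antidiagonal summable]
  refine tsum_congr fun r => ?_
  rw [sum_antidiagonal_mul_mul_apply_add (fun d => tauSh A (p ^ d)) (fun j => tauSh C (p ^ j))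
    fun n => tauSh B (p ^ n) / (p : ℂ) ^ n, ← tauSh_append_prime_pow hp]
  ring

end Convolution

end PrimePowers

theorem stmt11_general (A' B' : List ℂ) (βh : ℂ)
    (h : ∀ α ∈ A' ++ [-βh], ∀ β ∈ B', -1 < (α + β).re) (p : ℕ) (hp : p.Prime) :
    Summable (fun x : ℕ × ℕ =>
      ‖tauSh A' (p ^ x.1) / (p : ℂ) ^ x.1 *
        (tauSh B' (p ^ (x.2 + x.1)) * (p : ℂ) ^ (-(x.2 : ℂ) * (1 - βh)))‖) ∧
    Summable (fun r : ℕ =>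
      ‖tauSh B' (p ^ r) * tauSh (A' ++ [-βh]) (p ^ r) / (p : ℂ) ^ r‖) ∧
    ∑' d : ℕ, tauSh A' (p ^ d) / (p : ℂ) ^ d *
        ∑' j : ℕ, tauSh B' (p ^ (j + d)) * (p : ℂ) ^ (-(j : ℂ) * (1 - βh))
      = ∑' r : ℕ, tauSh B' (p ^ r) * tauSh (A' ++ [-βh]) (p ^ r) / (p : ℂ) ^ r := by
  have term_eq (d j : ℕ) : tauSh A' (p ^ d) / (p : ℂ) ^ d *
      (tauSh B' (p ^ (j + d)) * (p : ℂ) ^ (-(j : ℂ) * (1 - βh))) =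
      tauSh A' (p ^ d) * tauSh [-βh] (p ^ j) *
        (tauSh B' (p ^ (d + j)) / (p : ℂ) ^ (d + j)) := by
    rw [cpow_neg_natCast_mul_one_sub (Nat.cast_ne_zero.2 hp.ne_zero),
      tauSh_singleton_prime_pow hp, neg_neg, add_comm j d]
    ring
  simp only [← tsum_mul_left, term_eq]
  exact ⟨summable_norm_tauSh_mul_mul hp h, summable_norm_tauSh_mul_tauSh_append hp h,
    tsum_tsum_tauSh_mul_mul hp h⟩

/-- For tuples A′, B′ and a number β̂, all real parts of absolute value
< 1/4, and a prime p,
Σ_{d≥0} (τ_{A′}(p^d)/p^d) Σ_{j≥0} τ_{B′}(p^{j+d}) p^{−j(1−β̂)}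
  = Σ_{r≥0} τ_{B′}(p^r) τ_{A′∪{−β̂}}(p^r) p^{−r},
both double series converging absolutely. -/
theorem stmt11 (A' B' : List ℂ) (βh : ℂ)
    (hA : ∀ α ∈ A', |α.re| < 1/4) (hB : ∀ β ∈ B', |β.re| < 1/4) (hβ : |βh.re| < 1/4)
    (p : ℕ) (hp : p.Prime) :
    Summable (fun x : ℕ × ℕ =>
      ‖tauSh A' (p ^ x.1) / (p : ℂ) ^ x.1 *
        (tauSh B' (p ^ (x.2 + x.1)) * (p : ℂ) ^ (-(x.2 : ℂ) * (1 - βh)))‖) ∧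
    Summable (fun r : ℕ =>
      ‖tauSh B' (p ^ r) * tauSh (A' ++ [-βh]) (p ^ r) / (p : ℂ) ^ r‖) ∧
    ∑' d : ℕ, tauSh A' (p ^ d) / (p : ℂ) ^ d *
        ∑' j : ℕ, tauSh B' (p ^ (j + d)) * (p : ℂ) ^ (-(j : ℂ) * (1 - βh))
      = ∑' r : ℕ, tauSh B' (p ^ r) * tauSh (A' ++ [-βh]) (p ^ r) / (p : ℂ) ^ r := by
  refine stmt11_general A' B' βh (fun α hα β hβB => ?_) p hp
  grind [add_re, neg_re]
end

section
/- Let A be a tuple of complex numbers and s a complex number with ℜ(s+α) > 0 for every entry α of A. Then the function q ↦ G_A(s,q) on the positive integers is multiplicative: G_A(s, q₁q₂) = G_A(s, q₁) G_A(s, q₂) whenever gcd(q₁, q₂) = 1. -/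
open Complex

/-!
The factor of `g_A(s, q)` at `p` depends only on `p` and the exponent of `p` in `q`, so `g_A(s, ·)`
is multiplicative. In the double sum defining `G_A(s, q₁ q₂)`, coprimality splits each `d ∣ q₁ q₂`
uniquely as `d₁ d₂` with `dᵢ ∣ qᵢ`, and each `e ∣ d` as `e₁ e₂` with `eᵢ ∣ dᵢ`. Then `q₁ q₂ e / d`
is the product of the integers `qᵢ eᵢ / dᵢ`, which are coprime because `qᵢ eᵢ / dᵢ` divides `qᵢ²`,
and every summand factors.
-/

section CoprimeMultiplicative

variable {R : Type*}

/-- A function on `ℕ` that is multiplicative on coprime arguments. In contrast to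
`ArithmeticFunction.IsMultiplicative`, the values at `0` and `1` are not prescribed: `gSh A s` takes
the value `1` at `0`. -/
def CoprimeMultiplicative [Mul R] (f : ℕ → R) : Prop :=
  ∀ ⦃m n : ℕ⦄, m.Coprime n → f (m * n) = f m * f n

theorem CoprimeMultiplicative.mul [CommSemigroup R] {f g : ℕ → R}
    (hf : CoprimeMultiplicative f) (hg : CoprimeMultiplicative g) :
    CoprimeMultiplicative fun n => f n * g n := fun m n hmn => by
  simp only [hf hmn, hg hmn, mul_mul_mul_comm]

theorem CoprimeMultiplicative.div [DivisionCommMonoid R] {f g : ℕ → R}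
    (hf : CoprimeMultiplicative f) (hg : CoprimeMultiplicative g) :
    CoprimeMultiplicative fun n => f n / g n := fun m n hmn => by
  simp only [hf hmn, hg hmn, mul_div_mul_comm]

theorem mul_div_dvd_sq {q d e : ℕ} (hd : d ∣ q) (he : e ∣ q) : q * e / d ∣ q ^ 2 :=
  calc
    q * e / d ∣ q * e := Nat.div_dvd_of_dvd (hd.mul_right e)
    _ ∣ q * q := mul_dvd_mul_left q he
    _ = q ^ 2 := (sq q).symm

theorem CoprimeMultiplicative.map_mul_div [Mul R] {g : ℕ → R}
    (hg : CoprimeMultiplicative g) {q₁ q₂ d₁ d₂ e₁ e₂ : ℕ} (hq : q₁.Coprime q₂)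
    (hd₁ : d₁ ∣ q₁) (hd₂ : d₂ ∣ q₂) (he₁ : e₁ ∣ q₁) (he₂ : e₂ ∣ q₂) :
    g (q₁ * q₂ * (e₁ * e₂) / (d₁ * d₂)) = g (q₁ * e₁ / d₁) * g (q₂ * e₂ / d₂) := by
  have hcoprime : (q₁ * e₁ / d₁).Coprime (q₂ * e₂ / d₂) :=
    ((hq.pow 2 2).coprime_dvd_left (mul_div_dvd_sq hd₁ he₁)).coprime_dvd_right
      (mul_div_dvd_sq hd₂ he₂)
  rw [← hg hcoprime, Nat.div_mul_div_comm (hd₁.mul_right e₁) (hd₂.mul_right e₂),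
    mul_mul_mul_comm]

theorem coprimeMultiplicative_moebius [NonAssocRing R] :
    CoprimeMultiplicative fun n => (ArithmeticFunction.moebius n : R) := fun m n hmn => by
  simp only [ArithmeticFunction.isMultiplicative_moebius.map_mul_of_coprime hmn, Int.cast_mul]

theorem coprimeMultiplicative_totient [NonAssocSemiring R] :
    CoprimeMultiplicative fun n => (n.totient : R) := fun m n hmn => by
  simp only [Nat.totient_mul hmn, Nat.cast_mul]

theorem coprimeMultiplicative_natCast_cpow (s : ℂ) :
    CoprimeMultiplicative fun n => (n : ℂ) ^ s := fun m n _ => by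
  simp only [Nat.cast_mul, natCast_mul_natCast_cpow]

theorem coprimeMultiplicative_prod_primeFactors [CommMonoid R] (h : ℕ → ℕ → R) :
    CoprimeMultiplicative fun n => ∏ p ∈ n.primeFactors, h p (n.factorization p) := by
  intro m n hmn
  simp only [hmn.primeFactors_mul, Finset.prod_union hmn.disjoint_primeFactors]
  congr 1 <;> refine Finset.prod_congr rfl fun p hp => ?_
  · rw [Nat.factorization_eq_of_coprime_left hmn
      (Nat.mem_primeFactors_iff_mem_primeFactorsList.mp hp)]
  · rw [Nat.factorization_eq_of_coprime_right hmn
      (Nat.mem_primeFactors_iff_mem_primeFactorsList.mp hp)]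

end CoprimeMultiplicative

section TwistedDivisorSum

variable {R : Type*}

theorem sum_divisors_mul_of_coprime [AddCommMonoid R] {m n : ℕ} (hmn : m.Coprime n) (f : ℕ → R) :
    ∑ d ∈ (m * n).divisors, f d = ∑ a ∈ m.divisors, ∑ b ∈ n.divisors, f (a * b) := by
  rw [Nat.divisors_mul, Finset.mul_def, Finset.sum_image, Finset.sum_product]
  exact hmn.mul_injOn_divisors

theorem sum_divisors_mul_eq_mul_sum [NonUnitalNonAssocSemiring R] {m n : ℕ} (hmn : m.Coprime n)
    {f f₁ f₂ : ℕ → R} (hf : ∀ a b, a ∣ m → b ∣ n → f (a * b) = f₁ a * f₂ b) :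
    ∑ d ∈ (m * n).divisors, f d = (∑ a ∈ m.divisors, f₁ a) * ∑ b ∈ n.divisors, f₂ b := by
  rw [sum_divisors_mul_of_coprime hmn, Finset.sum_mul_sum]
  exact Finset.sum_congr rfl fun a ha => Finset.sum_congr rfl fun b hb =>
    hf a b (Nat.dvd_of_mem_divisors ha) (Nat.dvd_of_mem_divisors hb)

variable [CommSemiring R] {u v g : ℕ → R}

/-- The double divisor sum `∑_{d ∣ q} u(d) ∑_{e ∣ d} v(e) g(qe/d)`, of which `G_A(s, ·)` is the case
`u(d) = μ(d) d^s / φ(d)`, `v(e) = μ(e) / e^s`, `g = g_A(s, ·)`. The division `qe/d` is exact,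
since `d ∣ q`. -/
def twistedDivisorSum (u v g : ℕ → R) (q : ℕ) : R :=
  ∑ d ∈ q.divisors, u d * ∑ e ∈ d.divisors, v e * g (q * e / d)

theorem CoprimeMultiplicative.twistedDivisorSum (hu : CoprimeMultiplicative u)
    (hv : CoprimeMultiplicative v) (hg : CoprimeMultiplicative g) :
    CoprimeMultiplicative (twistedDivisorSum u v g) := by
  intro q₁ q₂ hq
  refine sum_divisors_mul_eq_mul_sum hq fun d₁ d₂ hd₁ hd₂ => ?_
  have hd : d₁.Coprime d₂ := (hq.coprime_dvd_left hd₁).coprime_dvd_right hd₂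
  have inner_sum_mul : ∑ e ∈ (d₁ * d₂).divisors, v e * g (q₁ * q₂ * e / (d₁ * d₂)) =
      (∑ e ∈ d₁.divisors, v e * g (q₁ * e / d₁)) * ∑ e ∈ d₂.divisors, v e * g (q₂ * e / d₂) := by
    refine sum_divisors_mul_eq_mul_sum hd fun e₁ e₂ he₁ he₂ => ?_
    have he : e₁.Coprime e₂ := (hd.coprime_dvd_left he₁).coprime_dvd_right he₂
    rw [hv he, hg.map_mul_div hq hd₁ hd₂ (he₁.trans hd₁) (he₂.trans hd₂), mul_mul_mul_comm]
  rw [hu hd, inner_sum_mul, mul_mul_mul_comm]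

end TwistedDivisorSum

theorem coprimeMultiplicative_gSh (A : List ℂ) (s : ℂ) : CoprimeMultiplicative (gSh A s) :=
  coprimeMultiplicative_prod_primeFactors fun p k =>
    (A.map fun α => 1 - (p : ℂ) ^ (-s - α)).prod *
      ∑' j : ℕ, tauSh A (p ^ (j + k)) * (p : ℂ) ^ (-(j : ℂ) * s)

/-- For a tuple A and s with ℜ(s+α) > 0 for every entry α of A, the
function q ↦ G_A(s,q) on the positive integers is multiplicative. -/
theorem stmt15 (A : List ℂ) (s : ℂ) (hA : ∀ α ∈ A, 0 < (s + α).re)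
    (q₁ q₂ : ℕ) (h₁ : 0 < q₁) (h₂ : 0 < q₂) (hco : Nat.Coprime q₁ q₂) :
    GSh A s (q₁ * q₂) = GSh A s q₁ * GSh A s q₂ := by
  have hu : CoprimeMultiplicative fun d : ℕ =>
      (ArithmeticFunction.moebius d : ℂ) / (Nat.totient d : ℂ) * (d : ℂ) ^ s :=
    (coprimeMultiplicative_moebius.div coprimeMultiplicative_totient).mul
      (coprimeMultiplicative_natCast_cpow s)
  have hv : CoprimeMultiplicative fun e : ℕ => (ArithmeticFunction.moebius e : ℂ) / (e : ℂ) ^ s :=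
    coprimeMultiplicative_moebius.div (coprimeMultiplicative_natCast_cpow s)
  exact hu.twistedDivisorSum hv (coprimeMultiplicative_gSh A s) hco
end
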